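/- Let 𝕊 denote symmetric 2×2 real matrices and let τ : ℝ² → 𝕊 be a polynomial matrix field of total degree at most 3 whose row-wise divergence vanishes identically: ∂₁τᵢ₁ + ∂₂τᵢ₂ = 0 for i = 1, 2. Then there exists a polynomial q : ℝ² → ℝ of total degree at most 5 such that τ = J q, i.e., τ₁₁ = ∂₂∂₂q, τ₁₂ = τ₂₁ = −∂₁∂₂q, and τ₂₂ = ∂₁∂₁q. -/

import Mathlib

/-- The `i`-th partial derivative of a scalar function on `ℝ²`. -/
noncomputable def pd2 (i : Fin 2) (f : (Fin 2 → ℝ) → ℝ) : (Fin 2 → ℝ) → ℝ :=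
  fun x => fderiv ℝ f x (Pi.single i 1)

/-- `PolyMat2 p` : matrix fields on `ℝ²` whose entries are polynomial functions of
total degree at most `p`. -/
def PolyMat2 (p : ℕ) : Set ((Fin 2 → ℝ) → Matrix (Fin 2) (Fin 2) ℝ) :=
  { τ | ∃ q : Matrix (Fin 2) (Fin 2) (MvPolynomial (Fin 2) ℝ),
      (∀ i j, (q i j).totalDegree ≤ p) ∧ ∀ x i j, τ x i j = MvPolynomial.eval x (q i j) }

open MvPolynomial in
theorem aux_hasFDeriv (p : MvPolynomial (Fin 2) ℝ) (x : Fin 2 → ℝ) :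
    ∃ L : (Fin 2 → ℝ) →L[ℝ] ℝ, HasFDerivAt (fun y => eval y p) L x ∧
      ∀ i, L (Pi.single i 1) = eval x (pderiv i p) := by
  induction p using MvPolynomial.induction_on with
  | C a => exact ⟨0, by simpa using hasFDerivAt_const a x, by simp⟩
  | add p q hp hq =>
    obtain ⟨L, h1, h2⟩ := hp
    obtain ⟨M, h3, h4⟩ := hq
    refine ⟨L + M, ?_, by simp [h2, h4]⟩
    simp only [map_add]
    exact h1.add h3
  | mul_X p j hp =>
    obtain ⟨L, h1, h2⟩ := hp
    have h3 := h1.mul (hasFDerivAt_apply (𝕜 := ℝ) j x)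
    refine ⟨eval x p • ContinuousLinearMap.proj j + x j • L, ?_, ?_⟩
    · simp only [map_mul, eval_X]
      exact h3
    intro i
    simp [h2, pderiv_X, Pi.single_apply, mul_comm]
    try split_ifs <;> simp

open MvPolynomial in
theorem aux_pd2 (i : Fin 2) (p : MvPolynomial (Fin 2) ℝ) :
    pd2 i (fun y => eval y p) = fun x => eval x (pderiv i p) := by
  funext x
  obtain ⟨L, h1, h2⟩ := aux_hasFDeriv p x
  rw [pd2, h1.fderiv, h2]

open MvPolynomial in
theorem aux_deg (i : Fin 2) (n : ℕ) (p : MvPolynomial (Fin 2) ℝ) (h : p.totalDegree ≤ n + 1) :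
    (pderiv i p).totalDegree ≤ n := by
  rw [totalDegree, Finset.sup_le_iff]
  intro m hm
  rw [mem_support_iff, coeff_pderiv] at hm
  have h1 := (le_totalDegree (mem_support_iff.2 (left_ne_zero_of_mul hm))).trans h
  rw [Finsupp.sum_add_index' (by simp) (by simp), Finsupp.sum_single_index (by simp)] at h1
  omega

/-- Antiderivative with respect to the `i`-th variable. -/
noncomputable def antiD (i : Fin 2) : MvPolynomial (Fin 2) ℝ →ₗ[ℝ] MvPolynomial (Fin 2) ℝ :=
  (MvPolynomial.basisMonomials (Fin 2) ℝ).constr ℝ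
    (fun m => MvPolynomial.monomial (m + Finsupp.single i 1) (((m i : ℝ) + 1)⁻¹))

open MvPolynomial in
theorem antiD_monomial (i : Fin 2) (m : Fin 2 →₀ ℕ) (c : ℝ) :
    antiD i (monomial m c) = monomial (m + Finsupp.single i 1) (c * ((m i : ℝ) + 1)⁻¹) := by
  have h : monomial m c = c • basisMonomials (Fin 2) ℝ m := by
    simp [smul_monomial]
  rw [h, map_smul, antiD, Module.Basis.constr_basis, smul_monomial, smul_eq_mul]

open MvPolynomial in
theorem pderiv_antiD (i : Fin 2) (p : MvPolynomial (Fin 2) ℝ) : pderiv i (antiD i p) = p := by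
  induction p using MvPolynomial.induction_on' with
  | add p q hp hq => simp [hp, hq]
  | monomial m c =>
    have : (m i : ℝ) + 1 ≠ 0 := by positivity
    rw [antiD_monomial, pderiv_monomial]
    simp [mul_assoc, this]

open MvPolynomial in
theorem pderiv_antiD_ne (i j : Fin 2) (hij : i ≠ j) (p : MvPolynomial (Fin 2) ℝ) :
    pderiv j (antiD i p) = antiD i (pderiv j p) := by
  induction p using MvPolynomial.induction_on' with
  | add p q hp hq => simp [hp, hq]
  | monomial m c =>
    rw [antiD_monomial, pderiv_monomial, pderiv_monomial, antiD_monomial]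
    have h1 : m + Finsupp.single i 1 - Finsupp.single j 1
        = m - Finsupp.single j 1 + Finsupp.single i 1 := by
      ext k
      simp only [Finsupp.coe_tsub, Finsupp.coe_add, Pi.sub_apply, Pi.add_apply,
        Finsupp.single_apply]
      split_ifs with h1 h2
      · exact absurd (h1.trans h2.symm) hij
      all_goals omega
    rw [h1]
    congr 1
    simp [Finsupp.single_apply, hij, hij.symm]
    ring

open MvPolynomial in
theorem antiD_deg (i : Fin 2) (n : ℕ) (p : MvPolynomial (Fin 2) ℝ) (h : p.totalDegree ≤ n) :
    (antiD i p).totalDegree ≤ n + 1 := by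
  rw [p.as_sum, map_sum]
  refine totalDegree_finsetSum_le fun m hm => ?_
  rw [antiD_monomial]
  refine (totalDegree_monomial_le _ _).trans ?_
  have h1 := (le_totalDegree hm).trans h
  rw [Finsupp.sum_add_index' (by simp) (by simp), Finsupp.sum_single_index (by simp)]
  exact Nat.add_le_add_right h1 1

open MvPolynomial in
theorem pderiv_swap (i j : Fin 2) (p : MvPolynomial (Fin 2) ℝ) :
    pderiv i (pderiv j p) = pderiv j (pderiv i p) := by
  ext m
  simp only [coeff_pderiv, Finsupp.coe_add, Pi.add_apply, Finsupp.single_apply]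
  rw [add_right_comm]
  by_cases h : i = j
  · subst h; rfl
  · simp [h, Ne.symm h]; ring

open MvPolynomial in
theorem poincare2 (n : ℕ) (p r : MvPolynomial (Fin 2) ℝ) (hp : p.totalDegree ≤ n)
    (hr : r.totalDegree ≤ n) (h : pderiv 0 p = pderiv 1 r) :
    ∃ Q : MvPolynomial (Fin 2) ℝ, Q.totalDegree ≤ n + 1 ∧ pderiv 1 Q = p ∧ pderiv 0 Q = r := by
  refine ⟨antiD 1 p + antiD 0 (r - pderiv 0 (antiD 1 p)), ?_, ?_, ?_⟩
  · refine (totalDegree_add _ _).trans (max_le (antiD_deg _ _ _ hp) (antiD_deg _ _ _ ?_))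
    exact (totalDegree_sub _ _).trans (max_le hr (aux_deg _ _ _ (antiD_deg _ _ _ hp)))
  · rw [map_add, pderiv_antiD, pderiv_antiD_ne 0 1 (by decide), map_sub, pderiv_swap 1 0,
      pderiv_antiD, h, sub_self, map_zero, add_zero]
  · rw [map_add, pderiv_antiD]; ring

/-- Polynomial-level exactness of the two-dimensional elasticity complex: every
symmetric cubic matrix field with identically vanishing row-wise divergence is
`J q` for some quintic polynomial `q`. -/
theorem divergence_free_symmetric_cubic_is_Jq
    (τ : (Fin 2 → ℝ) → Matrix (Fin 2) (Fin 2) ℝ)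
    (hsymm : ∀ x, (τ x).IsSymm)
    (hpoly : τ ∈ PolyMat2 3)
    (hdiv : ∀ x, ∀ i : Fin 2,
      pd2 0 (fun y => τ y i 0) x + pd2 1 (fun y => τ y i 1) x = 0) :
    ∃ q : (Fin 2 → ℝ) → ℝ,
      (∃ Q : MvPolynomial (Fin 2) ℝ, Q.totalDegree ≤ 5 ∧
        ∀ x, q x = MvPolynomial.eval x Q) ∧
      ∀ x, τ x 0 0 = pd2 1 (pd2 1 q) x ∧
           τ x 0 1 = -(pd2 0 (pd2 1 q) x) ∧
           τ x 1 0 = -(pd2 0 (pd2 1 q) x) ∧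
           τ x 1 1 = pd2 0 (pd2 0 q) x := by
  obtain ⟨q, hdeg, hq⟩ := hpoly
  have hq' : ∀ i j, (fun y => τ y i j) = fun y => MvPolynomial.eval y (q i j) :=
    fun i j => funext fun y => hq y i j
  have hs : q 1 0 = q 0 1 := by
    apply MvPolynomial.funext
    intro x
    rw [← hq, ← hq]
    exact (hsymm x).apply 0 1
  have hd : ∀ i, MvPolynomial.pderiv 0 (q i 0) + MvPolynomial.pderiv 1 (q i 1) = 0 := by
    intro i
    apply MvPolynomial.funext
    intro x
    have := hdiv x i
    rw [hq', hq', aux_pd2, aux_pd2] at this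
    simpa using this
  have hb : (-q 0 1).totalDegree ≤ 3 := by
    rw [MvPolynomial.totalDegree_neg]; exact hdeg 0 1
  have h0 := hd 0
  have h1 := hd 1
  rw [hs] at h1
  obtain ⟨u, hu, hu1, hu0⟩ := poincare2 3 (q 0 0) (-q 0 1) (hdeg 0 0) hb (by
    rw [map_neg]; exact eq_neg_of_add_eq_zero_left h0)
  obtain ⟨v, hv, hv1, hv0⟩ := poincare2 3 (-q 0 1) (q 1 1) hb (hdeg 1 1) (by
    rw [map_neg]; exact neg_eq_of_add_eq_zero_right h1)
  obtain ⟨Q, hQ, hQ1, hQ0⟩ := poincare2 4 u v hu hv (hu0.trans hv1.symm)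
  refine ⟨fun x => MvPolynomial.eval x Q, ⟨Q, hQ, fun _ => rfl⟩, fun x => ?_⟩
  simp only [aux_pd2, hQ1, hQ0, hu1, hu0, hv0, hq, hs, map_neg, neg_neg, and_self]
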